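/- arXiv:2507.00361 — 2 statements merged into one kernel-verified Lean document; each statement's English description precedes it below -/
import Mathlib

section
/- Let f satisfy the stated assumptions, let x ∈ ℝ^d, and set C := f(x) − f(x_*) and D := 2ω⁻¹(M²C/4) (with D := 0 if C = 0). Then for every τ, τ₂ ∈ [0,1], writing G := ∇²f(x + τ₂(x_* − x)): (1/(1+D))·G ⪯ ∇²f(x + τ(x_* − x)) ⪯ (1+D)·G. -/
/-!
Put `u = x - x_*`. Since `x_*` is a minimiser, `t ↦ f (x_* + t u)` has zero derivative at `0`, so
Taylor's formula with Lagrange remainder gives a point `z` on the segment where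
`uᵀ ∇²f(z) u = 2 C` (`exists_hessian_form_eq`). Strong self-concordance holds for *every* reference
point, so it may be used with this `z`: two points of the segment differ by a multiple `a u` with
`|a| ≤ 1`, and the factor `M ‖a u‖_z` is at most `M √(2C)`. The elementary bound `ω(y) ≤ y² / 2`
for `y ≥ 0` (`omegaFn_le_sq_div_two`) turns `ω(D/2) = M² C / 4` into `M √(2C) ≤ D`.
This yields the upper bound for every pair of points of the segment; exchanging the two points
gives the lower one.
-/

open Matrix Real Finset

noncomputable section

/-- `ω(x) = x − log(1+x)`. -/
def omegaFn (x : ℝ) : ℝ := x - Real.log (1 + x)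

/-- `Ψ(A) = Tr(A) − d − log det A`. -/
def Psi (d : ℕ) (A : Matrix (Fin d) (Fin d) ℝ) : ℝ :=
  A.trace - (d : ℝ) - Real.log A.det

/-- Loewner order: `A ⪯ B` iff `B − A` is positive semidefinite. -/
def loewnerLE {d : ℕ} (A B : Matrix (Fin d) (Fin d) ℝ) : Prop := (B - A).PosSemidef

/-- The BFGS Hessian-approximation update
`B⁺ = B − (B s sᵀ B)/(sᵀ B s) + (y yᵀ)/(sᵀ y)`. -/
def bfgsUpdate {d : ℕ} (B : Matrix (Fin d) (Fin d) ℝ) (s y : Fin d → ℝ) :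
    Matrix (Fin d) (Fin d) ℝ :=
  B - (s ⬝ᵥ (B *ᵥ s))⁻¹ • vecMulVec (B *ᵥ s) (Bᵀ *ᵥ s) + (s ⬝ᵥ y)⁻¹ • vecMulVec y y

/-- `M`-strong self-concordance of a Hessian field:
`∇²f(x) − ∇²f(y) ⪯ M‖x−y‖_z ∇²f(y)` for all `x, y, z`. -/
def StronglySelfConcordant {d : ℕ} (hess : (Fin d → ℝ) → Matrix (Fin d) (Fin d) ℝ)
    (M : ℝ) : Prop :=
  ∀ x y z : Fin d → ℝ,
    loewnerLE (hess x - hess y)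
      ((M * Real.sqrt ((x - y) ⬝ᵥ (hess z *ᵥ (x - y)))) • hess y)

lemma omegaFn_le_sq_div_two {y : ℝ} (hy : 0 ≤ y) : omegaFn y ≤ y ^ 2 / 2 := by
  have h := Real.le_log_one_add_of_nonneg hy
  have h2 : y - y ^ 2 / 2 ≤ 2 * y / (y + 2) := by
    rw [le_div_iff₀ (by linarith)]
    nlinarith [pow_nonneg hy 3]
  unfold omegaFn
  linarith

/-- Second-order Taylor formula with Lagrange remainder between a minimiser and another point;
the first-order term vanishes at the minimiser. -/
lemma exists_hessian_form_eq {d : ℕ}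
    (f : (Fin d → ℝ) → ℝ)
    (grad : (Fin d → ℝ) → (Fin d → ℝ))
    (hess : (Fin d → ℝ) → Matrix (Fin d) (Fin d) ℝ)
    (hf : ContDiff ℝ 2 f)
    (hgrad : ∀ x v, fderiv ℝ f x v = grad x ⬝ᵥ v)
    (hhess : ∀ x v, fderiv ℝ grad x v = hess x *ᵥ v)
    (xstar : Fin d → ℝ) (hmin : ∀ y, f xstar ≤ f y) (u : Fin d → ℝ) :
    ∃ z, u ⬝ᵥ (hess z *ᵥ u) = 2 * (f (xstar + u) - f xstar) := by
  -- `fderiv ℝ grad` takes a junk value unless `grad` is differentiable, which follows from `C²`.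
  have hgd : Differentiable ℝ grad := by
    have h1 : Differentiable ℝ (fderiv ℝ f) :=
      (hf.fderiv_right (m := 1) (by norm_num)).differentiable (by norm_num)
    rw [differentiable_pi]
    intro i
    have h2 : (fun x => grad x i) = fun x => fderiv ℝ f x (Pi.single i 1) := by
      funext x
      rw [hgrad]
      simp
    rw [h2]
    exact h1.clm_apply (differentiable_const _)
  have hline : ∀ t : ℝ, HasDerivAt (fun t : ℝ => xstar + t • u) u t := fun t => by
    simpa using ((hasDerivAt_id t).smul_const u).const_add xstar
  have hd1 : ∀ t : ℝ, HasDerivAt (fun t : ℝ => f (xstar + t • u))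
      (grad (xstar + t • u) ⬝ᵥ u) t := fun t => by
    rw [← hgrad]
    exact ((hf.differentiable (by norm_num)) (xstar + t • u)).hasFDerivAt.comp_hasDerivAt t
      (hline t)
  have hd2 : ∀ t : ℝ, HasDerivAt (fun t : ℝ => grad (xstar + t • u) ⬝ᵥ u)
      (u ⬝ᵥ (hess (xstar + t • u) *ᵥ u)) t := fun t => by
    have h1 : HasDerivAt (fun t : ℝ => grad (xstar + t • u)) (hess (xstar + t • u) *ᵥ u) t := by
      rw [← hhess]
      exact (hgd (xstar + t • u)).hasFDerivAt.comp_hasDerivAt t (hline t)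
    rw [dotProduct_comm]
    unfold dotProduct
    exact HasDerivAt.fun_sum fun i _ => ((hasDerivAt_pi.1 h1) i).mul_const (u i)
  have hzero : grad xstar ⬝ᵥ u = 0 := by
    have h : IsLocalMin f xstar := Filter.Eventually.of_forall hmin
    rw [← hgrad, h.fderiv_eq_zero]
    rfl
  -- Cauchy's mean value theorem against `t ↦ t ^ 2`, then the ordinary one for the derivative.
  obtain ⟨ξ, hξ, h1⟩ := exists_ratio_hasDerivAt_eq_ratio_slope
    (fun t : ℝ => f (xstar + t • u)) (fun t => grad (xstar + t • u) ⬝ᵥ u) zero_lt_one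
    (fun t _ => (hd1 t).continuousAt.continuousWithinAt) (fun t _ => hd1 t)
    (fun t : ℝ => t ^ 2) (fun t => 2 * t) (by fun_prop)
    (fun t _ => by simpa using hasDerivAt_pow 2 t)
  obtain ⟨η, -, h2⟩ := exists_hasDerivAt_eq_slope
    (fun t : ℝ => grad (xstar + t • u) ⬝ᵥ u)
    (fun t => u ⬝ᵥ (hess (xstar + t • u) *ᵥ u)) hξ.1
    (fun t _ => (hd2 t).continuousAt.continuousWithinAt) (fun t _ => hd2 t)
  refine ⟨xstar + η • u, ?_⟩
  have hξ0 : ξ ≠ 0 := hξ.1.ne'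
  simp only [zero_smul, add_zero, hzero, sub_zero, one_smul] at h1 h2
  rw [h2, div_eq_iff hξ0]
  linarith

lemma loewnerLE_one_add_smul_of_sub {d : ℕ} {A B : Matrix (Fin d) (Fin d) ℝ} {c D : ℝ}
    (hB : B.PosSemidef) (hcD : c ≤ D) (h : loewnerLE (A - B) (c • B)) :
    loewnerLE A ((1 + D) • B) := by
  unfold loewnerLE at *
  have h1 := h.add (hB.smul (sub_nonneg.2 hcD))
  convert h1 using 1
  module

/-- Comparison of Hessians at two points of the segment to the optimum (Lemma 4(c)). -/
theorem hessian_comparison_two_segment_points {d : ℕ}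
    (f : (Fin d → ℝ) → ℝ)
    (grad : (Fin d → ℝ) → (Fin d → ℝ))
    (hess : (Fin d → ℝ) → Matrix (Fin d) (Fin d) ℝ)
    (hf : ContDiff ℝ 2 f)
    (hgrad : ∀ x v, fderiv ℝ f x v = grad x ⬝ᵥ v)
    (hhess : ∀ x v, fderiv ℝ grad x v = hess x *ᵥ v)
    (hpd : ∀ x, (hess x).PosDef)
    (M : ℝ) (hM : 0 < M)
    (hssc : StronglySelfConcordant hess M)
    (xstar : Fin d → ℝ) (hmin : ∀ y, f xstar ≤ f y)
    (x : Fin d → ℝ) (C D : ℝ) (hCdef : C = f x - f xstar)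
    (hDdef : 0 ≤ D ∧ omegaFn (D / 2) = M ^ 2 * C / 4)
    (τ τ₂ : ℝ) (hτ : τ ∈ Set.Icc (0:ℝ) 1) (hτ₂ : τ₂ ∈ Set.Icc (0:ℝ) 1) :
    loewnerLE ((1 + D)⁻¹ • hess (x + τ₂ • (xstar - x))) (hess (x + τ • (xstar - x))) ∧
    loewnerLE (hess (x + τ • (xstar - x))) ((1 + D) • hess (x + τ₂ • (xstar - x))) := by
  obtain ⟨hD, hω⟩ := hDdef
  obtain ⟨z, hz⟩ := exists_hessian_form_eq f grad hess hf hgrad hhess xstar hmin (x - xstar)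
  rw [add_sub_cancel, ← hCdef] at hz
  have hbound : M ^ 2 * (2 * C) ≤ D ^ 2 := by
    have := omegaFn_le_sq_div_two (y := D / 2) (by linarith)
    nlinarith
  have hC : 0 ≤ C := by
    have := hmin x
    linarith
  -- The upper bound for an arbitrary pair of points of the segment.
  have key : ∀ s t : ℝ, s ∈ Set.Icc (0 : ℝ) 1 → t ∈ Set.Icc (0 : ℝ) 1 →
      loewnerLE (hess (x + s • (xstar - x))) ((1 + D) • hess (x + t • (xstar - x))) := by
    intro s t hs ht
    refine loewnerLE_one_add_smul_of_sub (hpd _).posSemidef ?_ (hssc _ _ z)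
    have hdiff : x + s • (xstar - x) - (x + t • (xstar - x)) = (t - s) • (x - xstar) := by
      module
    rw [hdiff, mulVec_smul, dotProduct_smul, smul_dotProduct, hz, smul_eq_mul, smul_eq_mul]
    have ha : (t - s) ^ 2 ≤ 1 := by
      nlinarith [hs.1, hs.2, ht.1, ht.2]
    refine abs_le_of_sq_le_sq' ?_ hD |>.2
    rw [mul_pow, Real.sq_sqrt (by nlinarith [mul_nonneg (sq_nonneg (t - s)) hC])]
    calc M ^ 2 * ((t - s) * ((t - s) * (2 * C))) = (t - s) ^ 2 * (M ^ 2 * (2 * C)) := by ring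
      _ ≤ 1 * (M ^ 2 * (2 * C)) := by gcongr
      _ ≤ D ^ 2 := by linarith
  refine ⟨?_, key τ τ₂ hτ hτ₂⟩
  have h := (key τ₂ τ hτ₂ hτ).smul (inv_nonneg.2 (by linarith : (0 : ℝ) ≤ 1 + D))
  unfold loewnerLE
  rwa [smul_sub, inv_smul_smul₀ (by positivity : (1 : ℝ) + D ≠ 0)] at h
end
end

section
/- Let f satisfy the stated assumptions, let x ∈ ℝ^d, set g := ∇f(x), C := f(x) − f(x_*), and let d ∈ ℝ^d be nonzero with ρ := (−gᵀd)/(dᵀ∇²f(x_*)d). If C ≤ min{1/16, (4/M²)ω(1/32)} and ρ ≥ 15/16, then f(x + d) ≤ f(x). -/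
/-!
Write `‖·‖` for the norm of `∇²f(x_*)`, `r = ‖x - x_*‖` and `δ = ‖d‖`. Everything is compared with
the Hessian at the minimizer, and the stated constants leave enough slack for crude estimates.

* On the segment from `x_*` to `x`, strong self-concordance gives
  `∇²f(x_*) / (1 + Mr) ⪯ ∇²f ⪯ (1 + Mr) ∇²f(x_*)`. As `∇f(x_*) = 0`, the lower bound gives
  `r² / (2 (1 + Mr)) ≤ C`; since `M² C ≤ 4 ω(1/32) ≤ 1/256`, this forces `Mr ≤ 1/8`.
* The upper bound, the mean value theorem and Cauchy–Schwarz give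
  `ρ δ² = -∇f(x)ᵀd ≤ (1 + Mr) r δ`, hence `Mδ ≤ 1/4`.
* On the segment from `x` to `x + d` the Hessian is at most `(1 + Mr + Mδ) ∇²f(x_*)`, so
  `f(x + d) - f(x) ≤ (-ρ + (1 + Mr + Mδ) / 2) δ² ≤ (-15/16 + 11/16) δ² ≤ 0`.
-/

open Matrix Real Finset

noncomputable section

lemma posSemidef_quad_nonneg {d : ℕ} {A : Matrix (Fin d) (Fin d) ℝ} (hA : A.PosSemidef)
    (u : Fin d → ℝ) : 0 ≤ u ⬝ᵥ (A *ᵥ u) := by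
  simpa using hA.dotProduct_mulVec_nonneg u

lemma posSemidef_bilin_comm {d : ℕ} {A : Matrix (Fin d) (Fin d) ℝ} (hA : A.PosSemidef)
    (u v : Fin d → ℝ) : u ⬝ᵥ (A *ᵥ v) = v ⬝ᵥ (A *ᵥ u) := by
  have h : Aᵀ = A := by simpa [Matrix.IsHermitian] using hA.isHermitian
  rw [Matrix.dotProduct_mulVec, ← Matrix.mulVec_transpose, h, dotProduct_comm]

/-- Cauchy–Schwarz for the form of a positive semidefinite matrix. -/
lemma posSemidef_cauchy_schwarz {d : ℕ} {A : Matrix (Fin d) (Fin d) ℝ} (hA : A.PosSemidef)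
    (u v : Fin d → ℝ) : (u ⬝ᵥ (A *ᵥ v)) ^ 2 ≤ (u ⬝ᵥ (A *ᵥ u)) * (v ⬝ᵥ (A *ᵥ v)) := by
  have key : ∀ t : ℝ, 0 ≤ (v ⬝ᵥ (A *ᵥ v)) * (t * t) + (2 * (u ⬝ᵥ (A *ᵥ v))) * t
      + u ⬝ᵥ (A *ᵥ u) := by
    intro t
    have h := posSemidef_quad_nonneg hA (u + t • v)
    have hc := posSemidef_bilin_comm hA v u
    simp only [Matrix.mulVec_add, Matrix.mulVec_smul, dotProduct_add, add_dotProduct,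
      dotProduct_smul, smul_dotProduct, smul_eq_mul] at h
    rw [hc] at h
    linarith
  have h := discrim_le_zero key
  unfold discrim at h
  linarith

/-- The triangle inequality for the seminorm `√(uᵀAu)` of a positive semidefinite matrix. -/
lemma sqrt_quad_add_le {d : ℕ} {A : Matrix (Fin d) (Fin d) ℝ} (hA : A.PosSemidef)
    (u v : Fin d → ℝ) : √((u + v) ⬝ᵥ (A *ᵥ (u + v))) ≤
      √(u ⬝ᵥ (A *ᵥ u)) + √(v ⬝ᵥ (A *ᵥ v)) := by
  have hu := posSemidef_quad_nonneg hA u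
  have hv := posSemidef_quad_nonneg hA v
  have hcs : u ⬝ᵥ (A *ᵥ v) ≤ √(u ⬝ᵥ (A *ᵥ u)) * √(v ⬝ᵥ (A *ᵥ v)) := by
    rw [← Real.sqrt_mul hu]
    exact Real.le_sqrt_of_sq_le (posSemidef_cauchy_schwarz hA u v)
  refine Real.sqrt_le_iff.mpr ⟨by positivity, ?_⟩
  simp only [Matrix.mulVec_add, dotProduct_add, add_dotProduct]
  rw [posSemidef_bilin_comm hA v u]
  nlinarith [Real.sq_sqrt hu, Real.sq_sqrt hv]

lemma sqrt_quad_smul {d : ℕ} (A : Matrix (Fin d) (Fin d) ℝ) (u : Fin d → ℝ) {t : ℝ}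
    (ht : 0 ≤ t) : √((t • u) ⬝ᵥ (A *ᵥ (t • u))) = t * √(u ⬝ᵥ (A *ᵥ u)) := by
  simp only [Matrix.mulVec_smul, dotProduct_smul, smul_dotProduct, smul_eq_mul]
  rw [← mul_assoc, Real.sqrt_mul (mul_self_nonneg t), Real.sqrt_mul_self ht]

/-- A Taylor upper bound on `[0, 1]` from an upper bound on the second derivative. -/
lemma le_of_second_deriv_le {φ φ' φ'' : ℝ → ℝ} {K : ℝ} (h1 : ∀ t, HasDerivAt φ (φ' t) t)
    (h2 : ∀ t, HasDerivAt φ' (φ'' t) t) (hK : ∀ t ∈ Set.Icc (0 : ℝ) 1, φ'' t ≤ K) :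
    φ 1 ≤ φ 0 + φ' 0 + K / 2 := by
  have a1 : ∀ t ∈ Set.Icc (0 : ℝ) 1, φ' t ≤ φ' 0 + K * t := by
    intro t ht
    have hder : ∀ s, HasDerivAt (fun s => φ' s - K * s) (φ'' s - K) s := fun s => by
      simpa using (h2 s).fun_sub ((hasDerivAt_id s).const_mul K)
    have hanti : AntitoneOn (fun s => φ' s - K * s) (Set.Icc (0 : ℝ) 1) := by
      refine antitoneOn_of_deriv_nonpos (convex_Icc 0 1)
        (fun s _ => (hder s).continuousAt.continuousWithinAt)
        (fun s _ => (hder s).differentiableAt.differentiableWithinAt) ?_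
      intro s hs
      rw [(hder s).deriv]
      linarith [hK s (interior_subset hs)]
    have := hanti (Set.left_mem_Icc.mpr zero_le_one) ht ht.1
    simp only [mul_zero, sub_zero] at this
    linarith
  have hder : ∀ s, HasDerivAt (fun s => φ s - φ' 0 * s - K / 2 * s ^ 2)
      (φ' s - φ' 0 - K * s) s := fun s => by
    have := ((h1 s).fun_sub ((hasDerivAt_id s).const_mul (φ' 0))).fun_sub
      ((hasDerivAt_pow 2 s).const_mul (K / 2))
    refine this.congr_deriv ?_
    push_cast
    ring
  have hanti : AntitoneOn (fun s => φ s - φ' 0 * s - K / 2 * s ^ 2) (Set.Icc (0 : ℝ) 1) := by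
    refine antitoneOn_of_deriv_nonpos (convex_Icc 0 1)
      (fun s _ => (hder s).continuousAt.continuousWithinAt)
      (fun s _ => (hder s).differentiableAt.differentiableWithinAt) ?_
    intro s hs
    rw [(hder s).deriv]
    linarith [a1 s (interior_subset hs)]
  have := hanti (Set.left_mem_Icc.mpr zero_le_one) (Set.right_mem_Icc.mpr zero_le_one) zero_le_one
  norm_num at this
  linarith

lemma le_of_le_second_deriv {φ φ' φ'' : ℝ → ℝ} {K : ℝ} (h1 : ∀ t, HasDerivAt φ (φ' t) t)
    (h2 : ∀ t, HasDerivAt φ' (φ'' t) t) (hK : ∀ t ∈ Set.Icc (0 : ℝ) 1, K ≤ φ'' t) :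
    φ 0 + φ' 0 + K / 2 ≤ φ 1 := by
  have := le_of_second_deriv_le (K := -K) (fun t => (h1 t).neg) (fun t => (h2 t).neg)
    (fun t ht => neg_le_neg (hK t ht))
  simp only [Pi.neg_apply] at this
  linarith

lemma hasDerivAt_line {d : ℕ} (a v : Fin d → ℝ) (t : ℝ) :
    HasDerivAt (fun t : ℝ => a + t • v) v t := by
  simpa using ((hasDerivAt_id t).smul_const v).const_add a

/-- The vector field `grad` inherits differentiability from `f`: its coordinates are values of
`fderiv ℝ f` at basis vectors. Without this, `fderiv ℝ grad` could be a junk value. -/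
lemma differentiable_grad {d : ℕ} {f : (Fin d → ℝ) → ℝ} {grad : (Fin d → ℝ) → (Fin d → ℝ)}
    (hf : ContDiff ℝ 2 f) (hgrad : ∀ x v, fderiv ℝ f x v = grad x ⬝ᵥ v) :
    Differentiable ℝ grad := by
  have hd : Differentiable ℝ (fderiv ℝ f) :=
    (hf.fderiv_right (m := 1) (by norm_num)).differentiable (by norm_num)
  rw [differentiable_pi]
  intro i
  have : (fun x => grad x i) = fun x => fderiv ℝ f x (Pi.single i 1) := by
    funext x
    rw [hgrad]
    simp
  rw [this]
  exact hd.clm_apply (differentiable_const _)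

lemma hasDerivAt_f_line {d : ℕ} {f : (Fin d → ℝ) → ℝ} {grad : (Fin d → ℝ) → (Fin d → ℝ)}
    (hf : ContDiff ℝ 2 f) (hgrad : ∀ x v, fderiv ℝ f x v = grad x ⬝ᵥ v)
    (a v : Fin d → ℝ) (t : ℝ) :
    HasDerivAt (fun t : ℝ => f (a + t • v)) (grad (a + t • v) ⬝ᵥ v) t := by
  rw [← hgrad]
  exact ((hf.differentiable (by norm_num)) (a + t • v)).hasFDerivAt.comp_hasDerivAt t
    (hasDerivAt_line a v t)

lemma hasDerivAt_grad_line {d : ℕ} {grad : (Fin d → ℝ) → (Fin d → ℝ)}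
    {hess : (Fin d → ℝ) → Matrix (Fin d) (Fin d) ℝ} (hdg : Differentiable ℝ grad)
    (hhess : ∀ x v, fderiv ℝ grad x v = hess x *ᵥ v) (a v w : Fin d → ℝ) (t : ℝ) :
    HasDerivAt (fun t : ℝ => grad (a + t • v) ⬝ᵥ w) (w ⬝ᵥ (hess (a + t • v) *ᵥ v)) t := by
  have h : HasDerivAt (fun t : ℝ => grad (a + t • v)) (hess (a + t • v) *ᵥ v) t := by
    rw [← hhess]
    exact (hdg (a + t • v)).hasFDerivAt.comp_hasDerivAt t (hasDerivAt_line a v t)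
  have h' := hasDerivAt_pi.mp h
  have := HasDerivAt.fun_sum (u := Finset.univ) (fun i _ => (h' i).mul_const (w i))
  rw [dotProduct_comm w]
  exact this

lemma ssc_quad_le {d : ℕ} {hess : (Fin d → ℝ) → Matrix (Fin d) (Fin d) ℝ} {M : ℝ}
    (hssc : StronglySelfConcordant hess M) (x y z v : Fin d → ℝ) :
    v ⬝ᵥ (hess x *ᵥ v) ≤
      (1 + M * √((x - y) ⬝ᵥ (hess z *ᵥ (x - y)))) * (v ⬝ᵥ (hess y *ᵥ v)) := by
  have h := posSemidef_quad_nonneg (hssc x y z) v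
  simp only [Matrix.sub_mulVec, Matrix.smul_mulVec, dotProduct_sub, dotProduct_smul,
    smul_eq_mul] at h
  linarith

/-- Function decrease for a unit step (Lemma 7). -/
theorem unit_step_decrease {d : ℕ}
    (f : (Fin d → ℝ) → ℝ)
    (grad : (Fin d → ℝ) → (Fin d → ℝ))
    (hess : (Fin d → ℝ) → Matrix (Fin d) (Fin d) ℝ)
    (hf : ContDiff ℝ 2 f)
    (hgrad : ∀ x v, fderiv ℝ f x v = grad x ⬝ᵥ v)
    (hhess : ∀ x v, fderiv ℝ grad x v = hess x *ᵥ v)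
    (hpd : ∀ x, (hess x).PosDef)
    (M : ℝ) (hM : 0 < M)
    (hssc : StronglySelfConcordant hess M)
    (xstar : Fin d → ℝ) (hmin : ∀ y, f xstar ≤ f y)
    (x : Fin d → ℝ) (C : ℝ) (hCdef : C = f x - f xstar)
    (dvec : Fin d → ℝ) (hd0 : dvec ≠ 0)
    (ρ : ℝ) (hρdef : ρ = (-(grad x ⬝ᵥ dvec)) / (dvec ⬝ᵥ (hess xstar *ᵥ dvec)))
    (hCle : C ≤ min (1/16) ((4 / M ^ 2) * omegaFn (1/32)))
    (hρge : ρ ≥ 15/16) :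
    f (x + dvec) ≤ f x := by
  have hdg := differentiable_grad hf hgrad
  have hsd : ∀ y, (hess y).PosSemidef := fun y => (hpd y).posSemidef
  have hg0 : ∀ v, grad xstar ⬝ᵥ v = 0 := by
    intro v
    have : IsLocalMin f xstar := Filter.Eventually.of_forall hmin
    rw [← hgrad, this.fderiv_eq_zero]
    simp
  set u := x - xstar with hu
  set r := √(u ⬝ᵥ (hess xstar *ᵥ u)) with hr
  set δ := √(dvec ⬝ᵥ (hess xstar *ᵥ dvec)) with hδ
  have hr0 : 0 ≤ r := Real.sqrt_nonneg _
  have hqu : u ⬝ᵥ (hess xstar *ᵥ u) = r ^ 2 :=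
    (Real.sq_sqrt (posSemidef_quad_nonneg (hsd _) u)).symm
  have hqd : dvec ⬝ᵥ (hess xstar *ᵥ dvec) = δ ^ 2 :=
    (Real.sq_sqrt (posSemidef_quad_nonneg (hsd _) dvec)).symm
  have hδ0 : 0 < δ := by
    refine Real.sqrt_pos.mpr ?_
    simpa using (hpd xstar).dotProduct_mulVec_pos hd0
  have hxu : xstar + (1 : ℝ) • u = x := by simp [hu]
  have hdist : ∀ t ∈ Set.Icc (0 : ℝ) 1,
      √((t • u) ⬝ᵥ (hess xstar *ᵥ (t • u))) ≤ r := by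
    intro t ht
    rw [sqrt_quad_smul _ _ ht.1]
    exact mul_le_of_le_one_left hr0 ht.2
  have hMr0 : 0 ≤ M * r := by positivity
  have hlow : r ^ 2 / (1 + M * r) / 2 ≤ C := by
    have key := le_of_le_second_deriv (K := r ^ 2 / (1 + M * r))
      (hasDerivAt_f_line hf hgrad xstar u) (hasDerivAt_grad_line hdg hhess xstar u u) ?_
    · simp only [zero_smul, add_zero, hg0, hxu] at key
      linarith
    · intro t ht
      rw [div_le_iff₀ (by positivity)]
      have h := ssc_quad_le hssc xstar (xstar + t • u) xstar u
      have e : xstar - (xstar + t • u) = -(t • u) := by abel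
      rw [e, Matrix.mulVec_neg, neg_dotProduct_neg, hqu] at h
      have := mul_le_mul_of_nonneg_left (hdist t ht) hM.le
      have := mul_le_mul_of_nonneg_right this (posSemidef_quad_nonneg (hsd (xstar + t • u)) u)
      linarith
  have hup : ∀ t ∈ Set.Icc (0 : ℝ) 1, ∀ v : Fin d → ℝ,
      v ⬝ᵥ (hess (xstar + t • u) *ᵥ v) ≤ (1 + M * r) * (v ⬝ᵥ (hess xstar *ᵥ v)) := by
    intro t ht v
    have h := ssc_quad_le hssc (xstar + t • u) xstar xstar v
    rw [add_sub_cancel_left] at h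
    have := mul_le_mul_of_nonneg_left (hdist t ht) hM.le
    have := mul_le_mul_of_nonneg_right this (posSemidef_quad_nonneg (hsd xstar) v)
    linarith
  have hMr : M * r ≤ 1 / 8 := by
    -- `log y ≥ 1 - 1/y` gives `ω(1/32) ≤ 1/1024`.
    have hom : omegaFn (1 / 32) ≤ 1 / 1024 := by
      have := Real.one_sub_inv_le_log_of_pos (x := 1 + 1 / 32) (by norm_num)
      unfold omegaFn
      norm_num at this ⊢
      linarith
    have hC : C ≤ 4 / M ^ 2 * (1 / 1024) :=
      (hCle.trans (min_le_right _ _)).trans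
        (mul_le_mul_of_nonneg_left hom (by positivity))
    have h1 : M ^ 2 * C ≤ 1 / 256 := by
      calc M ^ 2 * C ≤ M ^ 2 * (4 / M ^ 2 * (1 / 1024)) :=
            mul_le_mul_of_nonneg_left hC (by positivity)
        _ = 1 / 256 := by field_simp; norm_num
    have h2 : M ^ 2 * (r ^ 2 / (1 + M * r) / 2) ≤ 1 / 256 :=
      (mul_le_mul_of_nonneg_left hlow (by positivity)).trans h1
    have h3 : M ^ 2 * (r ^ 2 / (1 + M * r) / 2) = (M * r) ^ 2 / (2 * (1 + M * r)) := by
      field_simp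
    rw [h3, div_le_iff₀ (by positivity)] at h2
    nlinarith
  have hgd : grad x ⬝ᵥ dvec = -(ρ * δ ^ 2) := by
    rw [hρdef, hqd]
    field_simp
  -- Mean value theorem along `xstar + t u`, then Cauchy–Schwarz: a bound on the dual norm of `grad x`.
  have hdual : -(grad x ⬝ᵥ dvec) ≤ (1 + M * r) * (r * δ) := by
    have hder := hasDerivAt_grad_line hdg hhess xstar u dvec
    obtain ⟨t, ht, hslope⟩ := exists_hasDerivAt_eq_slope _ _ (zero_lt_one' ℝ)
      (fun s _ => (hder s).continuousAt.continuousWithinAt) (fun s _ => hder s)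
    simp only [zero_smul, add_zero, hg0, hxu, sub_zero, div_one] at hslope
    rw [← hslope]
    have ht' := Set.Ioo_subset_Icc_self ht
    refine (neg_le_abs _).trans (abs_le_of_sq_le_sq ?_ (by positivity))
    calc _ ≤ _ := posSemidef_cauchy_schwarz (hsd (xstar + t • u)) dvec u
      _ ≤ ((1 + M * r) * δ ^ 2) * ((1 + M * r) * r ^ 2) := by
        rw [← hqd, ← hqu]
        exact mul_le_mul (hup t ht' dvec) (hup t ht' u) (posSemidef_quad_nonneg (hsd _) u)
          (mul_nonneg (by positivity) (posSemidef_quad_nonneg (hsd _) dvec))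
      _ = _ := by ring
  have hMδ : M * δ ≤ 1 / 4 := by
    rw [hgd, neg_neg] at hdual
    have h1 : ρ * δ ≤ (1 + M * r) * r := by
      refine le_of_mul_le_mul_right ?_ hδ0
      linarith
    have h2 : M * ((15 / 16) * δ) ≤ M * ((1 + M * r) * r) :=
      mul_le_mul_of_nonneg_left ((mul_le_mul_of_nonneg_right hρge hδ0.le).trans h1) hM.le
    nlinarith
  have key := le_of_second_deriv_le (K := (1 + (M * r + M * δ)) * δ ^ 2)
    (hasDerivAt_f_line hf hgrad x dvec) (hasDerivAt_grad_line hdg hhess x dvec dvec) ?_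
  · simp only [zero_smul, add_zero, one_smul, hgd] at key
    nlinarith [sq_nonneg δ]
  · intro t ht
    have h := ssc_quad_le hssc (x + t • dvec) xstar xstar dvec
    have e : x + t • dvec - xstar = u + t • dvec := by rw [hu]; abel
    have htri := sqrt_quad_add_le (hsd xstar) u (t • dvec)
    rw [sqrt_quad_smul _ _ ht.1] at htri
    have hn : √((u + t • dvec) ⬝ᵥ (hess xstar *ᵥ (u + t • dvec))) ≤ r + δ :=
      htri.trans (add_le_add_right (mul_le_of_le_one_left hδ0.le ht.2) r)
    rw [e, hqd] at h
    have := mul_le_mul_of_nonneg_right (mul_le_mul_of_nonneg_left hn hM.le) (sq_nonneg δ)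
    linarith
end
end
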